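/- arXiv:2310.09591 — 2 statements merged into one kernel-verified Lean document; each statement's English description precedes it below -/
import Mathlib

section
/- Let K be an algebraically closed field of characteristic not 2 and R = K D∞ the group algebra of the infinite dihedral group D∞ = ⟨a, b | a² = b² = 1⟩. Every involution u ∈ R (u² = 1) is conjugate by a unit of R to exactly one of the six elements 1, -1, a, -a, b, -b. -/
/-!
Write `R = K D∞`. The element `θ = (ab + ba) / 2` is central, and over `K[θ] ≃ K[X]` the algebra
`R` is the quaternion algebra with basis `1, i, j, ij`, where `i = a`, `j = (ab - ba) / 2`,
`i² = 1` and `j² = X² - 1`. As `i² = 1`, this algebra is a matrix order: all `2 × 2` matrices over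
`K[X]` whose `(0, 1)` entry is divisible by `X² - 1`.

An involution other than `±1` becomes a matrix of trace zero, and factoring its two off-diagonal
entries compatibly with `(1 + α)(1 - α) = βγ` writes it as `v wᵀ - 1` with `wᵀ v = 2`. Two such
matrices are intertwined by an explicit matrix of determinant `4`, which lies in the order as soon
as the `(0, 0)` entries of the involutions agree modulo `X² - 1`. Those entries are `±1` at `X = 1`
and at `X = -1`, which gives the four classes of `±a` and `±b`. Modulo `X ∓ 1` the order is
triangular, so evaluating a diagonal entry at `±1` is a ring homomorphism to `K`; these
homomorphisms separate the six classes.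
-/

namespace InfiniteDihedral

open Polynomial
open scoped Quaternion

theorem exists_refinement_of_mul_eq_mul {M : Type*} [CommMonoidWithZero M] [IsCancelMulZero M]
    [DecompositionMonoid M] {x y z w : M} (h : x * y = z * w) :
    ∃ p q r s, x = p * q ∧ y = r * s ∧ z = p * r ∧ w = q * s := by
  rcases eq_or_ne x 0 with rfl | hx
  · rw [zero_mul, eq_comm, mul_eq_zero] at h
    rcases h with rfl | rfl
    · exact ⟨0, w, y, 1, by simp⟩
    · exact ⟨z, 0, 1, y, by simp⟩
  · obtain ⟨p, q, ⟨r, rfl⟩, ⟨s, rfl⟩, rfl⟩ := exists_dvd_and_dvd_of_dvd_mul (Dvd.intro y h)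
    refine ⟨p, q, r, s, rfl, mul_left_cancel₀ hx ?_, rfl, rfl⟩
    rw [h, mul_mul_mul_comm]

theorem isConj_iff_exists_inv_mul_mul {M : Type*} [Monoid M] {u v : M} :
    IsConj u v ↔ ∃ ν : Mˣ, ↑ν⁻¹ * u * ν = v := by
  rw [isConj_comm]
  exact exists_congr fun ν ↦ by rw [mul_assoc, Units.inv_mul_eq_iff_eq_mul, SemiconjBy, eq_comm]

section Involutions

open Matrix

variable {A : Type*} [CommRing A]

theorem eq_one_or_eq_neg_one_or_trace_eq_zero [NoZeroDivisors A] {M : Matrix (Fin 2) (Fin 2) A}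
    (hM : M * M = 1) : M = 1 ∨ M = -1 ∨ M.trace = 0 := by
  have entry (i j : Fin 2) : M i 0 * M 0 j + M i 1 * M 1 j =
      (1 : Matrix (Fin 2) (Fin 2) A) i j := by
    rw [← hM, mul_apply, Fin.sum_univ_two]
  have h00 : M 0 0 * M 0 0 + M 0 1 * M 1 0 = 1 := entry 0 0
  have h01 : M 0 0 * M 0 1 + M 0 1 * M 1 1 = 0 := entry 0 1
  have h10 : M 1 0 * M 0 0 + M 1 1 * M 1 0 = 0 := entry 1 0
  have h11 : M 1 0 * M 0 1 + M 1 1 * M 1 1 = 1 := entry 1 1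
  rcases eq_or_ne M.trace 0 with htr | htr
  · exact .inr (.inr htr)
  have cancel {y : A} (hy : y * M.trace = 0) : y = 0 := (mul_eq_zero.1 hy).resolve_right htr
  rw [trace_fin_two] at cancel
  have hβ : M 0 1 = 0 := cancel (by linear_combination h01)
  have hγ : M 1 0 = 0 := cancel (by linear_combination h10)
  have hδ : M 0 0 - M 1 1 = 0 := cancel (by linear_combination h00 - h11)
  have hscalar : M = M 0 0 • 1 := by
    rw [smul_one_eq_diagonal]
    ext i j
    fin_cases i <;> fin_cases j <;> simp [hβ, hγ, sub_eq_zero.1 hδ]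
  have hα : M 0 0 * M 0 0 = 1 := by linear_combination h00 - M 1 0 * hβ
  rcases mul_self_eq_one_iff.1 hα with h | h
  · exact .inl (by rw [hscalar, h, one_smul])
  · exact .inr (.inl (by rw [hscalar, h, neg_one_smul]))

theorem exists_eq_vecMulVec_sub_one [IsDomain A] [DecompositionMonoid A]
    {M : Matrix (Fin 2) (Fin 2) A} (hM : M * M = 1) (htr : M.trace = 0) :
    ∃ v w : Fin 2 → A, w ⬝ᵥ v = 2 ∧ M = vecMulVec v w - 1 := by
  have hδ : M 1 1 = -M 0 0 := by
    rw [trace_fin_two] at htr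
    exact eq_neg_of_add_eq_zero_right htr
  have h00 : M 0 0 * M 0 0 + M 0 1 * M 1 0 = 1 := by
    simpa [mul_apply] using congr_fun₂ hM 0 0
  obtain ⟨p, g, h, r, hpg, hhr, hph, hgr⟩ := exists_refinement_of_mul_eq_mul
    (show (1 + M 0 0) * (1 - M 0 0) = M 0 1 * M 1 0 by linear_combination -h00)
  have hα : M 0 0 = p * g - 1 := by rw [← hpg, add_sub_cancel_left]
  have hδ' : M 1 1 = r * h - 1 := by rw [hδ, mul_comm, ← hhr, sub_sub_cancel_left]
  refine ⟨![p, r], ![g, h], ?_, ?_⟩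
  · rw [vec2_dotProduct]
    simp only [cons_val_zero, cons_val_one]
    linear_combination -hpg - hhr
  · ext i j
    fin_cases i <;> fin_cases j <;> simp [hα, hph, hgr, hδ', mul_comm g]

/-- A matrix carrying `v` to a multiple of `v'` and the row `w'` to a multiple of `w`, used to
conjugate `v wᵀ - 1` into `v' w'ᵀ - 1`. The second summand kills `v` and is killed by `w'` on the
left; it makes the determinant `(wᵀ v) (w'ᵀ v')`. -/
def transition (v w v' w' : Fin 2 → A) : Matrix (Fin 2) (Fin 2) A :=
  vecMulVec v' w + vecMulVec ![w' 1, -w' 0] ![v 1, -v 0]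

variable (v w v' w' : Fin 2 → A)

theorem transition_mulVec : transition v w v' w' *ᵥ v = (w ⬝ᵥ v) • v' := by
  ext i
  fin_cases i <;> simp [transition, mulVec, dotProduct, Fin.sum_univ_two, vecMulVec_apply] <;> ring

theorem vecMul_transition : w' ᵥ* transition v w v' w' = (w' ⬝ᵥ v') • w := by
  ext i
  fin_cases i <;> simp [transition, vecMul, dotProduct, Fin.sum_univ_two, vecMulVec_apply] <;> ring

theorem det_transition : (transition v w v' w').det = (w ⬝ᵥ v) * (w' ⬝ᵥ v') := by
  simp only [transition, det_fin_two, vec2_dotProduct, Matrix.add_apply, vecMulVec_apply,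
    cons_val_zero, cons_val_one]
  ring

theorem transition_mul_eq_mul_transition (h : w ⬝ᵥ v = w' ⬝ᵥ v') :
    transition v w v' w' * (vecMulVec v w - 1) = (vecMulVec v' w' - 1) * transition v w v' w' := by
  rw [mul_sub, sub_mul, mul_vecMulVec, vecMulVec_mul, transition_mulVec, vecMul_transition, h,
    smul_vecMulVec, vecMulVec_smul, mul_one, one_mul]

end Involutions

section EichlerOrder

open Matrix

variable {A : Type*} [CommRing A] {d : A}

/-- The Eichler order of level `d` in the `2 × 2` matrices: those whose `(0, 1)` entry is divisible
by `d`. -/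
def eichlerOrder (d : A) : Subalgebra A (Matrix (Fin 2) (Fin 2) A) where
  carrier := {M | d ∣ M 0 1}
  mul_mem' {M N} hM hN := by
    simpa only [Set.mem_ofPred_eq, mul_apply, Fin.sum_univ_two] using
      dvd_add (dvd_mul_of_dvd_right hN _) (dvd_mul_of_dvd_left hM _)
  add_mem' hM hN := dvd_add hM hN
  algebraMap_mem' c := by simp [algebraMap_matrix_apply]

theorem mem_eichlerOrder {M : Matrix (Fin 2) (Fin 2) A} : M ∈ eichlerOrder d ↔ d ∣ M 0 1 :=
  Iff.rfl

namespace eichlerOrder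

theorem isUnit_of_isUnit_det {M : eichlerOrder d} (h : IsUnit M.1.det) :
    IsUnit M := by
  have hadj : adjugate M.1 ∈ eichlerOrder d := by
    rw [mem_eichlerOrder, adjugate_fin_two]
    exact dvd_neg.2 M.2
  obtain ⟨c, hc⟩ := h.exists_left_inv
  refine ⟨⟨M, c • ⟨_, hadj⟩, Subtype.ext ?_, Subtype.ext ?_⟩, rfl⟩
  · simp [mul_adjugate, smul_smul, hc]
  · simp [adjugate_mul, smul_smul, hc]

/-- The `i`-th diagonal entry, reduced along a homomorphism `f` killing the level. It is
multiplicative because the reduction of the Eichler order consists of triangular matrices. -/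
def diagHom {B : Type*} [CommRing B] (f : A →+* B) (hf : f d = 0) (i : Fin 2) :
    eichlerOrder d →+* B where
  toFun M := f (M.1 i i)
  map_one' := by simp
  map_zero' := by simp
  map_add' M N := by simp
  map_mul' M N := by
    have h01 (M : eichlerOrder d) : f (M.1 0 1) = 0 := by
      obtain ⟨k, hk⟩ := M.2
      rw [hk, map_mul, hf, zero_mul]
    fin_cases i <;> simp [mul_apply, Fin.sum_univ_two, h01]

theorem dvd_apply_zero_mul_apply_one (h2 : IsUnit (2 : A)) {v w v' w' : Fin 2 → A}
    (hvw : w ⬝ᵥ v = 2) (h : d ∣ v 0 * w 1) (h' : d ∣ v' 0 * w' 1)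
    (h00 : d ∣ v 0 * w 0 - v' 0 * w' 0) : d ∣ v 0 * w' 1 := by
  obtain ⟨k, hk⟩ := h
  obtain ⟨k', hk'⟩ := h'
  obtain ⟨l, hl⟩ := h00
  rw [vec2_dotProduct] at hvw
  refine h2.dvd_mul_left.1 ⟨v 0 * w' 1 * l + v 0 * w' 0 * k' + v 1 * w' 1 * k, ?_⟩
  linear_combination -(v 0 * w' 1) * hvw + v 0 * w' 1 * hl + v 0 * w' 0 * hk' + v 1 * w' 1 * hk

theorem transition_mem (h2 : IsUnit (2 : A)) {v w v' w' : Fin 2 → A}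
    (hvw : w ⬝ᵥ v = 2) (hvw' : w' ⬝ᵥ v' = 2) (h : d ∣ v 0 * w 1) (h' : d ∣ v' 0 * w' 1)
    (h00 : d ∣ v 0 * w 0 - v' 0 * w' 0) : transition v w v' w' ∈ eichlerOrder d := by
  have hentry : transition v w v' w' 0 1 = v' 0 * w 1 - v 0 * w' 1 := by
    simp only [transition, Matrix.add_apply, vecMulVec_apply, cons_val_zero, cons_val_one]
    ring
  rw [mem_eichlerOrder, hentry]
  exact dvd_sub (dvd_apply_zero_mul_apply_one h2 hvw' h' h (dvd_sub_comm.1 h00))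
    (dvd_apply_zero_mul_apply_one h2 hvw h h' h00)

theorem isConj_of_trace_eq_zero [IsDomain A] [DecompositionMonoid A] (h2 : IsUnit (2 : A))
    {M N : eichlerOrder d} (hM : M * M = 1) (hN : N * N = 1) (hMtr : M.1.trace = 0)
    (hNtr : N.1.trace = 0) (h : d ∣ M.1 0 0 - N.1 0 0) : IsConj M N := by
  obtain ⟨M, hMd⟩ := M
  obtain ⟨N, hNd⟩ := N
  obtain ⟨v, w, hvw, rfl⟩ := exists_eq_vecMulVec_sub_one (congrArg Subtype.val hM) hMtr
  obtain ⟨v', w', hvw', rfl⟩ := exists_eq_vecMulVec_sub_one (congrArg Subtype.val hN) hNtr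
  have hT : transition v w v' w' ∈ eichlerOrder d := by
    apply transition_mem h2 hvw hvw'
    · simpa [mem_eichlerOrder, vecMulVec_apply] using hMd
    · simpa [mem_eichlerOrder, vecMulVec_apply] using hNd
    · simpa [vecMulVec_apply] using h
  have hunit : IsUnit (⟨_, hT⟩ : eichlerOrder d) := isUnit_of_isUnit_det <| by
    rw [det_transition, hvw, hvw']
    exact h2.mul h2
  exact ⟨hunit.unit, Subtype.ext (transition_mul_eq_mul_transition _ _ _ _ (hvw.trans hvw'.symm))⟩

/-- Matrices in the Eichler order of level `d` that satisfy the relations of the quaternion algebra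
with `i² = 1` and `j² = d`. -/
def quaternionBasis (d : A) : QuaternionAlgebra.Basis (eichlerOrder d) (1 : A) 0 d where
  i := ⟨!![1, 0; 0, -1], by simp [mem_eichlerOrder]⟩
  j := ⟨!![0, d; 1, 0], by simp [mem_eichlerOrder]⟩
  k := ⟨!![0, d; -1, 0], by simp [mem_eichlerOrder]⟩
  i_mul_i := by ext i j; fin_cases i <;> fin_cases j <;> simp
  j_mul_j := by ext i j; fin_cases i <;> fin_cases j <;> simp
  i_mul_j := by ext i j; fin_cases i <;> fin_cases j <;> simp
  j_mul_i := by ext i j; fin_cases i <;> fin_cases j <;> simp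

theorem coe_lift_quaternionBasis (x : ℍ[A,1,0,d]) :
    ((quaternionBasis d).liftHom x : Matrix (Fin 2) (Fin 2) A) =
      !![x.re + x.imI, d * (x.imJ + x.imK); x.imJ - x.imK, x.re - x.imI] := by
  ext i j
  fin_cases i <;> fin_cases j <;>
    simp [QuaternionAlgebra.Basis.lift, quaternionBasis, algebraMap_matrix_apply] <;> ring

theorem bijective_liftHom_quaternionBasis (h2 : IsUnit (2 : A)) (hd : IsLeftRegular d) :
    Function.Bijective (quaternionBasis d).liftHom := by
  constructor
  · rw [injective_iff_map_eq_zero]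
    intro x hx
    have hx := (coe_lift_quaternionBasis x).symm.trans (congrArg Subtype.val hx)
    have h00 : x.re + x.imI = 0 := congr_fun₂ hx 0 0
    have h01 : x.imJ + x.imK = 0 := hd ((congr_fun₂ hx 0 1).trans (mul_zero d).symm)
    have h10 : x.imJ - x.imK = 0 := congr_fun₂ hx 1 0
    have h11 : x.re - x.imI = 0 := congr_fun₂ hx 1 1
    have half {y : A} (hy : 2 * y = 0) : y = 0 := h2.mul_right_eq_zero.1 hy
    ext
    · exact half (by linear_combination h00 + h11)
    · exact half (by linear_combination h00 - h11)
    · exact half (by linear_combination h01 + h10)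
    · exact half (by linear_combination h01 - h10)
  · rintro ⟨M, k, hk⟩
    obtain ⟨c, hc⟩ := h2.exists_left_inv
    have h00 : c * (M 0 0 + M 1 1) + c * (M 0 0 - M 1 1) = M 0 0 := by
      linear_combination M 0 0 * hc
    have h01 : d * (c * (k + M 1 0) + c * (k - M 1 0)) = M 0 1 := by
      linear_combination d * k * hc - hk
    have h10 : c * (k + M 1 0) - c * (k - M 1 0) = M 1 0 := by
      linear_combination M 1 0 * hc
    have h11 : c * (M 0 0 + M 1 1) - c * (M 0 0 - M 1 1) = M 1 1 := by
      linear_combination M 1 1 * hc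
    refine ⟨⟨c * (M 0 0 + M 1 1), c * (M 0 0 - M 1 1), c * (k + M 1 0), c * (k - M 1 0)⟩,
      Subtype.ext ?_⟩
    simp only [coe_lift_quaternionBasis, h00, h01, h10, h11, ← eta_fin_two]

end eichlerOrder

end EichlerOrder

section DihedralGroup

open DihedralGroup

theorem closure_reflections : Submonoid.closure ({sr 0, sr 1} : Set (DihedralGroup 0)) = ⊤ := by
  set S := Submonoid.closure ({sr 0, sr 1} : Set (DihedralGroup 0))
  have h0 : sr 0 ∈ S := Submonoid.subset_closure (by simp)
  have h1 : sr 1 ∈ S := Submonoid.subset_closure (by simp)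
  have hpos (n : ℕ) : r (n : ZMod 0) ∈ S := by simpa [r_pow] using pow_mem (mul_mem h0 h1) n
  have hneg (n : ℕ) : r (-n : ZMod 0) ∈ S := by simpa [r_pow] using pow_mem (mul_mem h1 h0) n
  have hr (i : ZMod 0) : r i ∈ S := by
    obtain ⟨n, hn | hn⟩ := Int.eq_nat_or_neg i
    · exact hn ▸ hpos n
    · exact hn ▸ hneg n
  rw [eq_top_iff]
  rintro (i | i) -
  · exact hr i
  · simpa using mul_mem h0 (hr i)

/-- The homomorphism out of a dihedral group that is `ρ` on rotations and sends the reflection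
`sr 0` to `s`. -/
def dihedralLift {n : ℕ} {M : Type*} [Monoid M] (ρ : Multiplicative (ZMod n) →* M) (s : M)
    (hs : s * s = 1) (hρ : ∀ i, ρ i * s = s * ρ i⁻¹) : DihedralGroup n →* M where
  toFun
    | r i => ρ (.ofAdd i)
    | sr i => s * ρ (.ofAdd i)
  map_one' := map_one ρ
  map_mul' := by
    rintro (i | i) (j | j)
    · exact map_mul ρ _ _
    · simp only [r_mul_sr, ← mul_assoc, hρ]
      rw [mul_assoc, ← map_mul, ← ofAdd_neg, ← ofAdd_add, neg_add_eq_sub]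
    · simp only [sr_mul_r, ofAdd_add, map_mul, mul_assoc]
    · simp only [sr_mul_sr]
      rw [mul_assoc, ← mul_assoc (ρ _) s, hρ, mul_assoc s, ← mul_assoc s s, hs, one_mul, ← map_mul,
        ← ofAdd_neg, ← ofAdd_add, neg_add_eq_sub]

/-- The universal property of `D∞ = ⟨a, b | a² = b² = 1⟩`, where the generators are the reflections
`sr 0` and `sr 1` of `DihedralGroup 0`. -/
def involutionsLift {M : Type*} [Monoid M] (a b : M) (ha : a * a = 1) (hb : b * b = 1) :
    DihedralGroup 0 →* M :=
  let s : Mˣ := ⟨a, a, ha, ha⟩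
  let t : Mˣ := ⟨b, b, hb, hb⟩
  have hinv : SemiconjBy s (s * t)⁻¹ (s * t) := by
    rw [SemiconjBy, mul_inv_rev, ← mul_assoc]
    rfl
  have hzpow (k : ℤ) : (s * t) ^ k * s = s * (s * t) ^ (-k) := by
    rw [← inv_zpow', (hinv.zpow_right k).eq]
  dihedralLift ((Units.coeHom M).comp (zpowersHom Mˣ (s * t))) a ha
    fun i ↦ congrArg Units.val (hzpow i.toAdd)

variable {M : Type*} [Monoid M] {a b : M} (ha : a * a = 1) (hb : b * b = 1)

theorem involutionsLift_sr_zero : involutionsLift a b ha hb (sr 0) = a :=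
  (congrArg (fun x : Mˣ ↦ a * (x : M)) (zpow_zero _)).trans (mul_one a)

theorem involutionsLift_sr_one : involutionsLift a b ha hb (sr 1) = b :=
  calc involutionsLift a b ha hb (sr 1) = a * (a * b) :=
        congrArg (fun x : Mˣ ↦ a * (x : M)) (zpow_one _)
    _ = b := by rw [← mul_assoc, ha, one_mul]

end DihedralGroup

section GroupAlgebra

open DihedralGroup

variable (K : Type*) [CommRing K]

/-- The first generating involution of `K D∞`. -/
noncomputable def a : MonoidAlgebra K (DihedralGroup 0) := MonoidAlgebra.of K _ (sr 0)

/-- The second generating involution of `K D∞`. -/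
noncomputable def b : MonoidAlgebra K (DihedralGroup 0) := MonoidAlgebra.of K _ (sr 1)

theorem adjoin_a_b : Algebra.adjoin K {a K, b K} = ⊤ := by
  have hof (g : DihedralGroup 0) : MonoidAlgebra.of K _ g ∈ Algebra.adjoin K {a K, b K} := by
    have hle : Submonoid.closure {sr 0, sr 1} ≤
        (Algebra.adjoin K {a K, b K}).toSubmonoid.comap (MonoidAlgebra.of K (DihedralGroup 0)) := by
      rw [Submonoid.closure_le, Set.insert_subset_iff, Set.singleton_subset_iff]
      exact ⟨Algebra.subset_adjoin (.inl rfl), Algebra.subset_adjoin (.inr rfl)⟩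
    exact hle (closure_reflections ▸ Submonoid.mem_top g)
  refine eq_top_iff.2 fun u _ ↦ ?_
  induction u using MonoidAlgebra.induction_on with
  | of g => exact hof g
  | add u v hu hv => exact add_mem (hu trivial) (hv trivial)
  | smul c u hu => exact Subalgebra.smul_mem _ (hu trivial) c

theorem a_mul_a : a K * a K = 1 := by
  rw [a, ← map_mul, sr_mul_self, map_one]

theorem b_mul_b : b K * b K = 1 := by
  rw [b, ← map_mul, sr_mul_self, map_one]

/-- The homomorphism from `K D∞` to the quaternion algebra with `i² = 1` and `j² = X² - 1` that
sends `a` to `i` and `b` to `X i + ij`. -/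
noncomputable def toQuaternion :
    MonoidAlgebra K (DihedralGroup 0) →ₐ[K] ℍ[K[X],1,0,X ^ 2 - 1] :=
  MonoidAlgebra.lift K _ _ <| involutionsLift ⟨0, 1, 0, 0⟩ ⟨0, X, 0, 1⟩
    (by ext1 <;> simp) (by ext1 <;> simp [pow_two])

theorem toQuaternion_a : toQuaternion K (a K) = ⟨0, 1, 0, 0⟩ := by
  rw [toQuaternion, a, MonoidAlgebra.lift_of, involutionsLift_sr_zero]

theorem toQuaternion_b : toQuaternion K (b K) = ⟨0, X, 0, 1⟩ := by
  rw [toQuaternion, b, MonoidAlgebra.lift_of, involutionsLift_sr_one]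

theorem isLeftRegular_X_sq_sub_one : IsLeftRegular (X ^ 2 - 1 : K[X]) := by
  simpa only [map_one] using (monic_X_pow_sub_C (1 : K) two_ne_zero).isRegular.left

variable [Invertible (2 : K)]

/-- The symmetric part `(ab + ba) / 2` of `ab`, a central element; it corresponds to `X`. -/
noncomputable def theta : MonoidAlgebra K (DihedralGroup 0) :=
  ⅟(2 : K) • (a K * b K + b K * a K)

/-- The skew part `(ab - ba) / 2` of `ab`; it corresponds to the quaternion `j`. -/
noncomputable def skew : MonoidAlgebra K (DihedralGroup 0) :=
  ⅟(2 : K) • (a K * b K - b K * a K)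

theorem theta_add_skew : theta K + skew K = a K * b K := by
  rw [theta, skew, ← smul_add, add_add_sub_cancel, ← two_smul K, invOf_smul_smul]

theorem theta_mem_center : theta K ∈ Subalgebra.center K (MonoidAlgebra K (DihedralGroup 0)) := by
  have ha : a K * theta K = theta K * a K := by
    simp only [theta, mul_smul_comm, smul_mul_assoc, mul_add, add_mul, ← mul_assoc, a_mul_a]
    rw [mul_assoc (b K), a_mul_a, mul_one, one_mul, add_comm]
  have hb : b K * theta K = theta K * b K := by
    simp only [theta, mul_smul_comm, smul_mul_assoc, mul_add, add_mul, ← mul_assoc, b_mul_b]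
    rw [mul_assoc (a K), b_mul_b, mul_one, one_mul, add_comm]
  have hle : Algebra.adjoin K {a K, b K} ≤ Subalgebra.centralizer K {theta K} := by
    rw [Algebra.adjoin_le_iff, Set.insert_subset_iff, Set.singleton_subset_iff]
    simp only [SetLike.mem_coe, Subalgebra.mem_centralizer_iff, Set.mem_singleton_iff, forall_eq]
    exact ⟨ha.symm, hb.symm⟩
  rw [Subalgebra.mem_center_iff]
  intro u
  have hu : u ∈ Subalgebra.centralizer K {theta K} := hle (adjoin_a_b K ▸ trivial)
  exact ((Subalgebra.mem_centralizer_iff K).1 hu _ rfl).symm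

theorem theta_sub_skew : theta K - skew K = b K * a K := by
  rw [theta, skew, ← smul_sub, add_sub_sub_cancel, ← two_smul K, invOf_smul_smul]

theorem skew_mul_skew : skew K * skew K = theta K * theta K - 1 := by
  have hcomm : Commute (theta K) (skew K) :=
    (Subalgebra.mem_center_iff.1 (theta_mem_center K) (skew K)).symm
  rw [eq_sub_iff_add_eq', ← eq_sub_iff_add_eq, hcomm.mul_self_sub_mul_self_eq, theta_add_skew,
    theta_sub_skew, mul_assoc, ← mul_assoc (b K), b_mul_b, one_mul, a_mul_a]

theorem skew_mul_a : skew K * a K = -(a K * skew K) := by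
  simp only [skew, mul_smul_comm, smul_mul_assoc, mul_sub, sub_mul, ← mul_assoc, a_mul_a,
    ← smul_neg]
  rw [mul_assoc (b K), a_mul_a, mul_one, one_mul, neg_sub]

/-- `K D∞` as an algebra over `K[X]`, with `X` acting as the central element `theta K`. It is not a
global instance, since it depends on the invertibility of `2`. -/
@[reducible]
noncomputable def polynomialAlgebra : Algebra K[X] (MonoidAlgebra K (DihedralGroup 0)) :=
  (aeval (theta K)).toRingHom.toAlgebra' fun p u ↦ by
    have hp : aeval (theta K) p ∈ Subalgebra.center K (MonoidAlgebra K (DihedralGroup 0)) :=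
      Algebra.adjoin_le (Set.singleton_subset_iff.2 (theta_mem_center K))
        (aeval_mem_adjoin_singleton K (theta K))
    exact (Subalgebra.mem_center_iff.1 hp u).symm

attribute [local instance] polynomialAlgebra

theorem algebraMap_polynomial_eq_aeval (p : K[X]) :
    algebraMap K[X] (MonoidAlgebra K (DihedralGroup 0)) p = aeval (theta K) p :=
  rfl

local instance : IsScalarTower K K[X] (MonoidAlgebra K (DihedralGroup 0)) :=
  .of_algebraMap_eq fun c ↦ (aeval_C (theta K) c).symm

theorem X_smul_one : (X : K[X]) • (1 : MonoidAlgebra K (DihedralGroup 0)) = theta K := by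
  rw [← Algebra.algebraMap_eq_smul_one]
  exact aeval_X (theta K)

/-- The elements `i = a`, `j = (ab - ba) / 2` and `k = ij` of `K D∞`, which satisfy the relations of
the quaternion algebra with `i² = 1` and `j² = X² - 1`. -/
noncomputable def quaternionBasis :
    QuaternionAlgebra.Basis (MonoidAlgebra K (DihedralGroup 0)) (1 : K[X]) 0 (X ^ 2 - 1) where
  i := a K
  j := skew K
  k := a K * skew K
  i_mul_i := by rw [a_mul_a, one_smul, zero_smul, add_zero]
  j_mul_j := by
    rw [skew_mul_skew, ← Algebra.algebraMap_eq_smul_one, map_sub, map_pow, map_one, pow_two,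
      Algebra.algebraMap_eq_smul_one, X_smul_one]
  i_mul_j := rfl
  j_mul_i := by rw [skew_mul_a, zero_smul, zero_sub]

theorem liftHom_quaternionBasis_apply (x : ℍ[K[X],1,0,X ^ 2 - 1]) :
    (quaternionBasis K).liftHom x = aeval (theta K) x.re + aeval (theta K) x.imI * a K +
      aeval (theta K) x.imJ * skew K + aeval (theta K) x.imK * (a K * skew K) := by
  simp only [QuaternionAlgebra.Basis.liftHom_apply, QuaternionAlgebra.Basis.lift, quaternionBasis,
    Algebra.smul_def, algebraMap_polynomial_eq_aeval]

theorem liftHom_comp_toQuaternion :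
    ((quaternionBasis K).liftHom.restrictScalars K).comp (toQuaternion K) = .id K _ := by
  have ha : (quaternionBasis K).liftHom (toQuaternion K (a K)) = a K := by
    rw [toQuaternion_a, liftHom_quaternionBasis_apply]
    simp
  have hb : (quaternionBasis K).liftHom (toQuaternion K (b K)) = b K :=
    calc _ = theta K * a K + a K * skew K := by
          rw [toQuaternion_b, liftHom_quaternionBasis_apply]
          simp
      _ = a K * (theta K + skew K) := by
          rw [mul_add, Subalgebra.mem_center_iff.1 (theta_mem_center K)]
      _ = b K := by rw [theta_add_skew, ← mul_assoc, a_mul_a, one_mul]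
  refine AlgHom.ext_of_adjoin_eq_top (adjoin_a_b K) ?_
  rintro _ (rfl | rfl)
  exacts [ha, hb]

theorem toQuaternion_theta : toQuaternion K (theta K) = algebraMap K[X] _ X := by
  simp only [theta, map_smul, map_add, map_mul, toQuaternion_a, toQuaternion_b]
  rw [invOf_smul_eq_iff]
  ext1 <;> simp [two_smul]

theorem toQuaternion_aeval (p : K[X]) :
    toQuaternion K (aeval (theta K) p) = algebraMap K[X] _ p := by
  rw [← aeval_algHom_apply, toQuaternion_theta, aeval_algebraMap_apply, aeval_X_left_apply]

theorem toQuaternion_skew : toQuaternion K (skew K) = ⟨0, 0, 1, 0⟩ := by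
  rw [eq_sub_of_add_eq' (theta_add_skew K), map_sub, map_mul, toQuaternion_theta, toQuaternion_a,
    toQuaternion_b]
  ext1 <;> simp

theorem toQuaternion_liftHom (x : ℍ[K[X],1,0,X ^ 2 - 1]) :
    toQuaternion K ((quaternionBasis K).liftHom x) = x := by
  simp only [liftHom_quaternionBasis_apply, map_add, map_mul, toQuaternion_aeval,
    toQuaternion_skew, toQuaternion_a]
  ext1 <;> simp

/-- `K D∞` is the quaternion algebra over `K[X]` with `i² = 1` and `j² = X² - 1`. -/
noncomputable def quaternionEquiv :
    MonoidAlgebra K (DihedralGroup 0) ≃ₐ[K] ℍ[K[X],1,0,X ^ 2 - 1] :=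
  .ofAlgHom (toQuaternion K) ((quaternionBasis K).liftHom.restrictScalars K)
    (AlgHom.ext (toQuaternion_liftHom K)) (liftHom_comp_toQuaternion K)

theorem isUnit_two : IsUnit (2 : K[X]) := by
  simpa only [map_ofNat] using (isUnit_of_invertible (2 : K)).map (C : K →+* K[X])

/-- `K D∞` is the Eichler order of level `X² - 1` over `K[X]`. -/
noncomputable def eichlerEquiv :
    MonoidAlgebra K (DihedralGroup 0) ≃ₐ[K] eichlerOrder (X ^ 2 - 1 : K[X]) :=
  (quaternionEquiv K).trans <| (AlgEquiv.ofBijective (eichlerOrder.quaternionBasis _).liftHom <|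
    eichlerOrder.bijective_liftHom_quaternionBasis (isUnit_two K)
      (isLeftRegular_X_sq_sub_one K)).restrictScalars K

theorem coe_eichlerEquiv_a : (eichlerEquiv K (a K)).1 = !![1, 0; 0, -1] := by
  refine (eichlerOrder.coe_lift_quaternionBasis _).trans ?_
  simp [quaternionEquiv, toQuaternion_a]

theorem coe_eichlerEquiv_b : (eichlerEquiv K (b K)).1 = !![X, X ^ 2 - 1; -1, -X] := by
  refine (eichlerOrder.coe_lift_quaternionBasis _).trans ?_
  simp [quaternionEquiv, toQuaternion_b]

end GroupAlgebra

section Classification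

variable {K : Type*} [CommRing K]

variable (K) in
/-- The representatives `±1`, `±a`, `±b` of the conjugacy classes of involutions of `K D∞`. -/
def representatives : Set (MonoidAlgebra K (DihedralGroup 0)) :=
  {1, -1, a K, -a K, b K, -b K}

theorem X_sq_sub_one_dvd_iff [Invertible (2 : K)] {p : K[X]} :
    X ^ 2 - 1 ∣ p ↔ p.eval 1 = 0 ∧ p.eval (-1) = 0 := by
  have hfactor : (X ^ 2 - 1 : K[X]) = (X - C 1) * (X - C (-1)) := by
    simp only [map_neg, map_one]
    ring
  have hunit : IsUnit (1 - -1 : K) := by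
    rw [sub_neg_eq_add, one_add_one_eq_two]
    exact isUnit_of_invertible 2
  have hcoprime := isCoprime_X_sub_C_of_isUnit_sub hunit
  rw [hfactor, ← IsRoot.def, ← IsRoot.def, ← dvd_iff_isRoot, ← dvd_iff_isRoot]
  exact ⟨fun h ↦ ⟨dvd_of_mul_right_dvd h, dvd_of_mul_left_dvd h⟩,
    fun h ↦ hcoprime.mul_dvd h.1 h.2⟩

variable [Invertible (2 : K)]

/-- For `x = ±1`, the ring homomorphism `K D∞ → K` evaluating the `i`-th diagonal entry of the
matrix of an element at `x`. -/
noncomputable def character (x : K) (hx : x ^ 2 = 1) (i : Fin 2) :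
    MonoidAlgebra K (DihedralGroup 0) →+* K :=
  (eichlerOrder.diagHom (evalRingHom x) (by simp [hx]) i).comp (eichlerEquiv K).toRingHom

theorem character_apply (x : K) (hx : x ^ 2 = 1) (i : Fin 2)
    (u : MonoidAlgebra K (DihedralGroup 0)) :
    character x hx i u = ((eichlerEquiv K u).1 i i).eval x :=
  rfl

theorem eq_of_isConj [Nontrivial K] {v w : MonoidAlgebra K (DihedralGroup 0)}
    (hv : v ∈ representatives K) (hw : w ∈ representatives K) (h : IsConj v w) : v = w := by
  have hchar (x : K) (hx : x ^ 2 = 1) (i : Fin 2) : character x hx i v = character x hx i w :=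
    isConj_iff_eq.1 ((character x hx i).toMonoidHom.map_isConj h)
  have h0 := hchar 1 (one_pow 2) 0
  have h1 := hchar 1 (one_pow 2) 1
  have h0' := hchar (-1) neg_one_sq 0
  have hne : (1 : K) ≠ -1 := fun h ↦
    (isUnit_of_invertible (2 : K)).ne_zero (by linear_combination h)
  rcases hv with rfl | rfl | rfl | rfl | rfl | rfl <;>
    rcases hw with rfl | rfl | rfl | rfl | rfl | rfl <;>
    simp [character_apply, coe_eichlerEquiv_a, coe_eichlerEquiv_b, hne, hne.symm] at h0 h1 h0' ⊢

theorem isConj_of_character_eq [IsDomain K] [DecompositionMonoid K[X]]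
    {u v : MonoidAlgebra K (DihedralGroup 0)} (hu : u * u = 1) (hv : v * v = 1)
    (hutr : (eichlerEquiv K u).1.trace = 0) (hvtr : (eichlerEquiv K v).1.trace = 0)
    (h1 : character 1 (one_pow 2) 0 u = character 1 (one_pow 2) 0 v)
    (h1' : character (-1) neg_one_sq 0 u = character (-1) neg_one_sq 0 v) : IsConj u v := by
  have hsq {u : MonoidAlgebra K (DihedralGroup 0)} (hu : u * u = 1) :
      eichlerEquiv K u * eichlerEquiv K u = 1 := by rw [← map_mul, hu, map_one]
  have hdvd : X ^ 2 - 1 ∣ (eichlerEquiv K u).1 0 0 - (eichlerEquiv K v).1 0 0 := by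
    rw [X_sq_sub_one_dvd_iff, eval_sub, eval_sub]
    exact ⟨sub_eq_zero.2 h1, sub_eq_zero.2 h1'⟩
  simpa using (eichlerEquiv K).symm.toMonoidHom.map_isConj <|
    eichlerOrder.isConj_of_trace_eq_zero (isUnit_two K) (hsq hu) (hsq hv) hutr hvtr hdvd

theorem exists_isConj_of_trace_eq_zero [IsDomain K] [DecompositionMonoid K[X]]
    {u : MonoidAlgebra K (DihedralGroup 0)} (hu : u * u = 1)
    (htr : (eichlerEquiv K u).1.trace = 0) : ∃ v ∈ representatives K, IsConj u v := by
  have hsign (x : K) (hx : x ^ 2 = 1) : character x hx 0 u = 1 ∨ character x hx 0 u = -1 := by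
    rw [← mul_self_eq_one_iff, ← map_mul, hu, map_one]
  have hatr : (eichlerEquiv K (a K)).1.trace = 0 := by
    simp [coe_eichlerEquiv_a, Matrix.trace_fin_two]
  have hbtr : (eichlerEquiv K (b K)).1.trace = 0 := by
    simp [coe_eichlerEquiv_b, Matrix.trace_fin_two]
  have ha (x : K) (hx : x ^ 2 = 1) : character x hx 0 (a K) = 1 := by
    simp [character_apply, coe_eichlerEquiv_a]
  have hb (x : K) (hx : x ^ 2 = 1) : character x hx 0 (b K) = x := by
    simp [character_apply, coe_eichlerEquiv_b]
  have neg_mul_self {v : MonoidAlgebra K (DihedralGroup 0)} (hv : v * v = 1) : -v * -v = 1 := by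
    rw [neg_mul_neg, hv]
  have neg_trace {v : MonoidAlgebra K (DihedralGroup 0)} (hv : (eichlerEquiv K v).1.trace = 0) :
      (eichlerEquiv K (-v)).1.trace = 0 := by
    rw [map_neg, NegMemClass.coe_neg, Matrix.trace_neg, hv, neg_zero]
  rcases hsign 1 (one_pow 2) with h | h <;> rcases hsign (-1) neg_one_sq with h' | h'
  · exact ⟨a K, by simp [representatives], isConj_of_character_eq hu (a_mul_a K) htr hatr
      (by rw [h, ha]) (by rw [h', ha])⟩
  · exact ⟨b K, by simp [representatives], isConj_of_character_eq hu (b_mul_b K) htr hbtr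
      (by rw [h, hb]) (by rw [h', hb])⟩
  · exact ⟨-b K, by simp [representatives], isConj_of_character_eq hu (neg_mul_self (b_mul_b K)) htr
      (neg_trace hbtr) (by rw [h, map_neg, hb]) (by rw [h', map_neg, hb, neg_neg])⟩
  · exact ⟨-a K, by simp [representatives], isConj_of_character_eq hu (neg_mul_self (a_mul_a K)) htr
      (neg_trace hatr) (by rw [h, map_neg, ha]) (by rw [h', map_neg, ha])⟩

theorem exists_isConj [IsDomain K] [DecompositionMonoid K[X]]
    {u : MonoidAlgebra K (DihedralGroup 0)} (hu : u * u = 1) :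
    ∃ v ∈ representatives K, IsConj u v := by
  have hsq : eichlerEquiv K u * eichlerEquiv K u = 1 := by rw [← map_mul, hu, map_one]
  rcases eq_one_or_eq_neg_one_or_trace_eq_zero (congrArg Subtype.val hsq) with h | h | htr
  · have hu1 : u = 1 := (eichlerEquiv K).injective (Subtype.ext (by simpa using h))
    exact ⟨1, by simp [representatives], by rw [hu1]⟩
  · have hu1 : u = -1 := (eichlerEquiv K).injective (Subtype.ext (by simpa using h))
    exact ⟨-1, by simp [representatives], by rw [hu1]⟩
  · exact exists_isConj_of_trace_eq_zero hu htr

end Classification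

end InfiniteDihedral

open InfiniteDihedral in
theorem stmt_7_general (K : Type*) [CommRing K] [IsDomain K] [DecompositionMonoid (Polynomial K)]
    (h2 : IsUnit (2 : K)) (u : MonoidAlgebra K (DihedralGroup 0)) (hu : u * u = 1) :
    let R := MonoidAlgebra K (DihedralGroup 0)
    let a : R := MonoidAlgebra.of K (DihedralGroup 0) (DihedralGroup.sr 0)
    let b : R := MonoidAlgebra.of K (DihedralGroup 0) (DihedralGroup.sr 1)
    ∃! v, v ∈ ({1, -1, a, -a, b, -b} : Set R) ∧
      ∃ ν : Rˣ, (↑ν⁻¹ : R) * u * ν = v := by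
  let := h2.invertible
  simp only [← isConj_iff_exists_inv_mul_mul]
  obtain ⟨v, hv, huv⟩ := exists_isConj hu
  exact ⟨v, ⟨hv, huv⟩, fun w hw ↦ eq_of_isConj hw.1 hv (hw.2.symm.trans huv)⟩

theorem stmt_7 (K : Type*) [Field K] [IsAlgClosed K] (hK : ringChar K ≠ 2)
    (u : MonoidAlgebra K (DihedralGroup 0)) (hu : u * u = 1) :
    let R := MonoidAlgebra K (DihedralGroup 0)
    let a : R := MonoidAlgebra.of K (DihedralGroup 0) (DihedralGroup.sr 0)
    let b : R := MonoidAlgebra.of K (DihedralGroup 0) (DihedralGroup.sr 1)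
    ∃! v, v ∈ ({1, -1, a, -a, b, -b} : Set R) ∧
      ∃ ν : Rˣ, (↑ν⁻¹ : R) * u * ν = v :=
  stmt_7_general K (Ring.two_ne_zero hK).isUnit u hu
end

section
/- Let K be an algebraically closed field of characteristic not 2 and R = K D∞. Every idempotent of R is conjugate by a unit to exactly one of 0, 1, (1-a)/2, (1+a)/2, (1-b)/2, (1+b)/2; in particular R has exactly four conjugacy classes of idempotents other than 0 and 1. -/
/-!
Write `τ = (ab + ba) / 2`, a central element. Over `K[τ] ≅ K[X]` the group algebra `R` is free on
`1, a, b, ab`, and `a ↦ diag(1, -1)`, `b ↦ [X, -1; X² - 1, -X]` embeds it into `M₂(K[X])` as the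
subring of matrices whose lower left entry is divisible by `X² - 1`. An idempotent of `M₂(K[X])`
other than `0` and `1` has trace one and determinant zero, hence has the form `P E₀₀ P⁻¹` with
`det P = 1`. If `Q E₀₀ Q⁻¹` is a second one, both lie in the subring, and their upper left entries
agree at `X = ±1`, then the conjugating matrix `P Q⁻¹` also lies in the subring. The upper left
entries take only the values `0` and `1` at `±1`, and the four possible pairs of values are those
of `(1 ± a) / 2` and `(1 ± b) / 2`. The characters `a, b ↦ ±1` show that the six standard
idempotents are pairwise not conjugate.
-/

open Polynomial

section RankOneIdempotent

variable {A : Type*} [CommRing A] {M N : Matrix (Fin 2) (Fin 2) A}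

/-- A `2 × 2` matrix of trace one and determinant zero. By Cayley–Hamilton such a matrix is
idempotent, and over a domain these are exactly the idempotents other than `0` and `1`. -/
structure IsRankOneIdempotent (M : Matrix (Fin 2) (Fin 2) A) : Prop where
  trace_eq_one : M.trace = 1
  det_eq_zero : M.det = 0

theorem mul_self_eq_trace_smul_sub_det_smul_one (M : Matrix (Fin 2) (Fin 2) A) :
    M * M = M.trace • M - M.det • (1 : Matrix (Fin 2) (Fin 2) A) := by
  ext i j
  fin_cases i <;> fin_cases j <;>
    simp [Matrix.mul_apply, Matrix.trace_fin_two, Matrix.det_fin_two] <;> ring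

theorem eq_zero_or_eq_one_or_isRankOneIdempotent [IsDomain A] (hM : IsIdempotentElem M) :
    M = 0 ∨ M = 1 ∨ IsRankOneIdempotent M := by
  have hdet : IsIdempotentElem M.det := by
    simpa only [Matrix.coe_detMonoidHom] using hM.map Matrix.detMonoidHom
  rcases IsIdempotentElem.iff_eq_zero_or_one.mp hdet with h | h
  · have hsmul : (M.trace - 1) • M = 0 := by
      have := mul_self_eq_trace_smul_sub_det_smul_one M
      rw [hM.eq, h, zero_smul, sub_zero] at this
      rw [sub_smul, one_smul, ← this, sub_self]
    rcases smul_eq_zero.mp hsmul with ht | h0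
    · exact .inr (.inr ⟨sub_eq_zero.mp ht, h⟩)
    · exact .inl h0
  · have hunit : IsUnit M := (Matrix.isUnit_iff_isUnit_det M).mpr (h ▸ isUnit_one)
    exact .inr (.inl (hunit.mul_eq_left.mp hM.eq))

theorem isRankOneIdempotent_invOf_two_smul_one_add {K : Type*} [CommRing K] [Algebra K A]
    [Invertible (2 : K)] (htr : M.trace = 0) (hdet : M.det = -1) :
    IsRankOneIdempotent ((⅟2 : K) • (1 + M)) := by
  rw [Matrix.trace_fin_two] at htr
  rw [Matrix.det_fin_two] at hdet
  constructor
  · have h : (1 + M).trace = 1 + 1 := by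
      rw [Matrix.trace_add, Matrix.trace_one, Matrix.trace_fin_two, htr, add_zero, Fintype.card_fin,
        Nat.cast_ofNat, one_add_one_eq_two]
    rw [Matrix.trace_smul, h, ← two_smul K (1 : A), invOf_smul_smul]
  · have h : (1 + M).det = 0 := by
      rw [Matrix.det_fin_two]
      simp only [Matrix.add_apply, Matrix.one_apply_eq, ne_eq, zero_ne_one, one_ne_zero,
        not_false_eq_true, Matrix.one_apply_ne]
      linear_combination htr + hdet
    rw [Matrix.det_smul_of_tower, h, smul_zero]

theorem exists_eq_vecMulVec_of_det_eq_zero [IsDomain A] [DecompositionMonoid A]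
    (hM : M.det = 0) : ∃ v f : Fin 2 → A, M = Matrix.vecMulVec v f := by
  have hdet : M 0 0 * M 1 1 = M 0 1 * M 1 0 := by rw [← sub_eq_zero, ← hM, Matrix.det_fin_two]
  suffices ∃ v₀ v₁ f₀ f₁,
      M 0 0 = v₀ * f₀ ∧ M 0 1 = v₀ * f₁ ∧ M 1 0 = v₁ * f₀ ∧ M 1 1 = v₁ * f₁ by
    obtain ⟨v₀, v₁, f₀, f₁, h₀₀, h₀₁, h₁₀, h₁₁⟩ := this
    refine ⟨![v₀, v₁], ![f₀, f₁], ?_⟩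
    ext i j
    fin_cases i <;> fin_cases j <;> simp [Matrix.vecMulVec_apply, *]
  by_cases hp : M 0 0 = 0
  · rcases mul_eq_zero.mp (show M 0 1 * M 1 0 = 0 by rw [← hdet, hp, zero_mul]) with h | h
    · exact ⟨0, 1, M 1 0, M 1 1, by simp [hp, h]⟩
    · exact ⟨M 0 1, M 1 1, 0, 1, by simp [hp, h]⟩
  · obtain ⟨v₀, f₀, ⟨f₁, h₀₁⟩, ⟨v₁, h₁₀⟩, h₀₀⟩ :=
      exists_dvd_and_dvd_of_dvd_mul (Dvd.intro _ hdet)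
    refine ⟨v₀, v₁, f₀, f₁, h₀₀, h₀₁, h₁₀.trans (mul_comm _ _), mul_left_cancel₀ hp ?_⟩
    rw [hdet, h₀₁, h₁₀, h₀₀]
    ring

theorem mul_single_mul_adjugate (P : Matrix (Fin 2) (Fin 2) A) :
    P * Matrix.single 0 0 1 * P.adjugate =
      !![P 0 0 * P 1 1, -(P 0 0 * P 0 1); P 1 0 * P 1 1, -(P 1 0 * P 0 1)] := by
  rw [Matrix.adjugate_fin_two]
  ext i j
  fin_cases i <;> fin_cases j <;>
    simp [Matrix.mul_apply, Matrix.single_apply, Fin.sum_univ_two]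

theorem IsRankOneIdempotent.exists_eq_mul_single_mul_adjugate [IsDomain A] [DecompositionMonoid A]
    (hM : IsRankOneIdempotent M) :
    ∃ P : Matrix (Fin 2) (Fin 2) A, P.det = 1 ∧ M = P * Matrix.single 0 0 1 * P.adjugate := by
  obtain ⟨v, f, rfl⟩ := exists_eq_vecMulVec_of_det_eq_zero hM.det_eq_zero
  -- The columns span the image and the kernel of `M`; the determinant is `f ⬝ᵥ v = trace M`.
  refine ⟨!![v 0, -f 1; v 1, f 0], ?_, ?_⟩
  · rw [Matrix.det_fin_two_of, ← hM.trace_eq_one, Matrix.trace_fin_two, Matrix.vecMulVec_apply,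
      Matrix.vecMulVec_apply]
    ring
  · rw [mul_single_mul_adjugate]
    ext i j
    fin_cases i <;> fin_cases j <;> simp [Matrix.vecMulVec_apply]

theorem dvd_mul_adjugate_apply_one_zero {P Q : Matrix (Fin 2) (Fin 2) A} {w : A}
    (hdetP : P.det = 1) (hdetQ : Q.det = 1) (hP : w ∣ P 1 0 * P 1 1) (hQ : w ∣ Q 1 0 * Q 1 1)
    (hPQ : w ∣ P 0 0 * P 1 1 - Q 0 0 * Q 1 1) : w ∣ (P * Q.adjugate) 1 0 := by
  rw [Matrix.det_fin_two] at hdetP hdetQ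
  have hentry : (P * Q.adjugate) 1 0 = P 1 0 * Q 1 1 - P 1 1 * Q 1 0 := by
    rw [Matrix.adjugate_fin_two]
    simp [Matrix.mul_apply, sub_eq_add_neg]
  have hcomb : (P * Q.adjugate) 1 0 = (P 1 0 * P 1 1) * (P 0 0 * Q 1 1 + P 0 1 * Q 1 0)
      - (Q 1 0 * Q 1 1) * (P 1 0 * Q 0 1 + P 1 1 * Q 0 0)
      - (P 0 0 * P 1 1 - Q 0 0 * Q 1 1) * (P 1 0 * Q 1 1 + P 1 1 * Q 1 0) := by
    rw [hentry]
    linear_combination P 1 1 * Q 1 0 * hdetP - P 1 0 * Q 1 1 * hdetQ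
  rw [hcomb]
  exact ((hP.mul_right _).sub (hQ.mul_right _)).sub (hPQ.mul_right _)

theorem IsRankOneIdempotent.exists_det_eq_one_mul_eq_mul [IsDomain A] [DecompositionMonoid A]
    {w : A} (hM : IsRankOneIdempotent M) (hN : IsRankOneIdempotent N)
    (hM₁₀ : w ∣ M 1 0) (hN₁₀ : w ∣ N 1 0) (h₀₀ : w ∣ M 0 0 - N 0 0) :
    ∃ G : Matrix (Fin 2) (Fin 2) A, G.det = 1 ∧ w ∣ G 1 0 ∧ M * G = G * N := by
  obtain ⟨P, hP, rfl⟩ := hM.exists_eq_mul_single_mul_adjugate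
  obtain ⟨Q, hQ, rfl⟩ := hN.exists_eq_mul_single_mul_adjugate
  have hPP : P.adjugate * P = 1 := by rw [Matrix.adjugate_mul, hP, one_smul]
  have hQQ : Q.adjugate * Q = 1 := by rw [Matrix.adjugate_mul, hQ, one_smul]
  refine ⟨P * Q.adjugate, ?_, dvd_mul_adjugate_apply_one_zero hP hQ ?_ ?_ ?_, ?_⟩
  · simp only [Matrix.det_mul, Matrix.det_adjugate, hP, hQ, one_pow, mul_one]
  · simpa [mul_single_mul_adjugate] using hM₁₀
  · simpa [mul_single_mul_adjugate] using hN₁₀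
  · simpa [mul_single_mul_adjugate] using h₀₀
  · calc P * Matrix.single 0 0 1 * P.adjugate * (P * Q.adjugate)
        = P * Matrix.single 0 0 1 * (P.adjugate * P) * Q.adjugate := by simp only [mul_assoc]
      _ = P * (Q.adjugate * Q) * Matrix.single 0 0 1 * Q.adjugate := by
          rw [hPP, hQQ, mul_one, mul_one]
      _ = P * Q.adjugate * (Q * Matrix.single 0 0 1 * Q.adjugate) := by simp only [mul_assoc]

end RankOneIdempotent

theorem exists_add_eq_and_sub_eq (K : Type*) [Ring K] [Invertible (2 : K)] {V : Type*}
    [AddCommGroup V] [Module K V] (x y : V) : ∃ p q : V, p + q = x ∧ p - q = y :=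
  ⟨(⅟2 : K) • (x + y), (⅟2 : K) • (x - y),
    by rw [← smul_add, add_add_sub_cancel, ← two_smul K x, invOf_smul_smul],
    by rw [← smul_sub, add_sub_sub_cancel, ← two_smul K y, invOf_smul_smul]⟩

theorem eq_zero_of_add_eq_zero_of_sub_eq_zero (K : Type*) [Ring K] [Invertible (2 : K)]
    {V : Type*} [AddCommGroup V] [Module K V] {p q : V} (hadd : p + q = 0) (hsub : p - q = 0) :
    p = 0 ∧ q = 0 := by
  obtain rfl : p = q := sub_eq_zero.mp hsub
  rw [← two_smul K p] at hadd
  have hp : p = 0 := by rw [← invOf_smul_smul (2 : K) p, hadd, smul_zero]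
  exact ⟨hp, hp⟩

section XSqSubOne

variable {K : Type*} [CommRing K]

theorem X_sq_sub_one_monic : (X ^ 2 - 1 : K[X]).Monic := monic_X_pow_sub_C 1 two_ne_zero

theorem X_sq_sub_one_dvd_of_eval_eq_zero [Invertible (2 : K)] {p : K[X]}
    (h₁ : p.eval 1 = 0) (h₂ : p.eval (-1) = 0) : X ^ 2 - 1 ∣ p := by
  have hcoprime : IsCoprime (X - C (1 : K)) (X - C (-1)) :=
    isCoprime_X_sub_C_of_isUnit_sub <| by
      rw [sub_neg_eq_add, one_add_one_eq_two]
      exact isUnit_of_invertible 2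
  have hfactor : (X ^ 2 - 1 : K[X]) = (X - C 1) * (X - C (-1)) := by
    rw [C_neg, C_1]
    ring
  rw [hfactor]
  exact hcoprime.mul_dvd (dvd_iff_isRoot.mpr h₁) (dvd_iff_isRoot.mpr h₂)

end XSqSubOne

section Dihedral

variable {n : ℕ} {G : Type*} [Group G]

theorem zpow_mul_mul_eq_mul_zpow_neg {x y : G} (hx : x * x = 1) (hy : y * y = 1) (k : ℤ) :
    (x * y) ^ k * x = x * (x * y) ^ (-k) := by
  have hxy : SemiconjBy x (x * y)⁻¹ (x * y) := by
    rw [SemiconjBy, mul_inv_rev, inv_eq_of_mul_eq_one_left hx, inv_eq_of_mul_eq_one_left hy,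
      mul_assoc]
  rw [zpow_neg, ← inv_zpow]
  exact (hxy.zpow_right k).eq.symm

/-- The homomorphism from the dihedral group of order `2 * n` (infinite if `n = 0`) sending the
reflections `sr 0` and `sr 1` to given involutions whose product has order dividing `n`. -/
def dihedralLift (n : ℕ) (x y : G) (hx : x * x = 1) (hy : y * y = 1) (hxy : (x * y) ^ n = 1) :
    DihedralGroup n →* G :=
  let φ : ZMod n →+ Additive G :=
    ZMod.lift n ⟨zmultiplesHom _ (.ofMul (x * y)), congrArg Additive.ofMul <| by simpa using hxy⟩
  { toFun
    | .r i => (φ i).toMul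
    | .sr i => x * (φ i).toMul
    map_one' := by rw [DihedralGroup.one_def]; simp only [map_zero, toMul_zero]
    map_mul' := by
      have φ_mul (i : ZMod n) : (φ i).toMul * x = x * (φ (-i)).toMul := by
        obtain ⟨k, rfl⟩ := ZMod.intCast_surjective i
        simpa [φ] using zpow_mul_mul_eq_mul_zpow_neg hx hy k
      rintro (i | i) (j | j)
      · simp
      · simp [← mul_assoc, φ_mul, sub_eq_neg_add]
      · simp [mul_assoc]
      · simp only [DihedralGroup.sr_mul_sr, sub_eq_neg_add, map_add, toMul_add, mul_assoc]
        rw [← mul_assoc _ x, φ_mul, mul_assoc, ← mul_assoc x x, hx, one_mul] }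

theorem dihedralLift_sr_zero (x y : G) (hx : x * x = 1) (hy : y * y = 1)
    (hxy : (x * y) ^ n = 1) : dihedralLift n x y hx hy hxy (.sr 0) = x := by
  simp [dihedralLift]

theorem dihedralLift_sr_one (x y : G) (hx : x * x = 1) (hy : y * y = 1)
    (hxy : (x * y) ^ n = 1) : dihedralLift n x y hx hy hxy (.sr 1) = y := by
  change x * Additive.toMul _ = y
  rw [← Int.cast_one, ZMod.lift_coe]
  simp [← mul_assoc, hx]

theorem submonoid_eq_top_of_sr_mem {S : Submonoid (DihedralGroup n)}
    (h₀ : DihedralGroup.sr 0 ∈ S) (h₁ : DihedralGroup.sr 1 ∈ S) : S = ⊤ := by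
  have hr (k : ℤ) : DihedralGroup.r (k : ZMod n) ∈ S := by
    obtain ⟨m, rfl | rfl⟩ := k.eq_nat_or_neg
    · simpa using pow_mem (mul_mem h₀ h₁) m
    · simpa using pow_mem (mul_mem h₁ h₀) m
  rw [eq_top_iff]
  rintro (i | i) -
  all_goals obtain ⟨k, rfl⟩ := ZMod.intCast_surjective i
  · exact hr k
  · simpa using mul_mem h₀ (hr k)

end Dihedral

section GroupAlgebra

variable (K : Type*) [CommRing K]

/-- The group algebra of the infinite dihedral group. -/
abbrev InfiniteDihedralAlgebra : Type _ := MonoidAlgebra K (DihedralGroup 0)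

namespace InfiniteDihedralAlgebra

/-- The first reflection generating the infinite dihedral group, in its group algebra. -/
noncomputable def a : InfiniteDihedralAlgebra K := MonoidAlgebra.of K _ (.sr 0)

/-- The second reflection generating the infinite dihedral group, in its group algebra. -/
noncomputable def b : InfiniteDihedralAlgebra K := MonoidAlgebra.of K _ (.sr 1)

theorem a_mul_a : a K * a K = 1 := by
  rw [a, ← map_mul, DihedralGroup.sr_mul_sr, sub_self, DihedralGroup.r_zero, map_one]

theorem b_mul_b : b K * b K = 1 := by
  rw [b, ← map_mul, DihedralGroup.sr_mul_sr, sub_self, DihedralGroup.r_zero, map_one]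

variable {B : Type*} [Ring B] [Algebra K B]

variable {K}

/-- The algebra homomorphism sending the generators `a` and `b` to two elements of square one. -/
noncomputable def lift (x y : B) (hx : x * x = 1) (hy : y * y = 1) :
    InfiniteDihedralAlgebra K →ₐ[K] B :=
  MonoidAlgebra.lift K B _ <| (Units.coeHom B).comp <|
    dihedralLift 0 ⟨x, x, hx, hx⟩ ⟨y, y, hy, hy⟩ (Units.ext hx) (Units.ext hy) (pow_zero _)

theorem lift_a (x y : B) (hx : x * x = 1) (hy : y * y = 1) : lift x y hx hy (a K) = x := by
  rw [lift, a, MonoidAlgebra.lift_of, MonoidHom.comp_apply, dihedralLift_sr_zero,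
    Units.coeHom_apply]

theorem lift_b (x y : B) (hx : x * x = 1) (hy : y * y = 1) : lift x y hx hy (b K) = y := by
  rw [lift, b, MonoidAlgebra.lift_of, MonoidHom.comp_apply, dihedralLift_sr_one,
    Units.coeHom_apply]

theorem adjoin_a_b_eq_top : Algebra.adjoin K {a K, b K} = ⊤ := by
  have hS : (Algebra.adjoin K {a K, b K}).toSubmonoid.comap (MonoidAlgebra.of K _) = ⊤ :=
    submonoid_eq_top_of_sr_mem (Algebra.subset_adjoin (Set.mem_insert _ _))
      (Algebra.subset_adjoin (Set.mem_insert_of_mem _ rfl))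
  rw [eq_top_iff]
  rintro u -
  induction u using MonoidAlgebra.induction_on with
  | of g => exact (hS ▸ Submonoid.mem_top g :)
  | add x y hx hy => exact add_mem hx hy
  | smul r x hx => exact Subalgebra.smul_mem _ hx r

@[elab_as_elim]
theorem induction_left {motive : InfiniteDihedralAlgebra K → Prop} (one : motive 1)
    (add : ∀ u v, motive u → motive v → motive (u + v))
    (smul : ∀ (k : K) u, motive u → motive (k • u)) (a_mul : ∀ u, motive u → motive (a K * u))
    (b_mul : ∀ u, motive u → motive (b K * u)) (u : InfiniteDihedralAlgebra K) : motive u := by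
  suffices ∀ v, motive v → motive (u * v) by simpa only [mul_one] using this 1 one
  have hu : u ∈ Algebra.adjoin K {a K, b K} := adjoin_a_b_eq_top (K := K) ▸ Algebra.mem_top
  induction hu using Algebra.adjoin_induction with
  | mem g hg =>
    rcases hg with rfl | rfl
    exacts [a_mul, b_mul]
  | algebraMap k => exact fun v hv => (Algebra.smul_def k v) ▸ smul k v hv
  | add g h _ _ hg hh => exact fun v hv => add_mul g h v ▸ add _ _ (hg v hv) (hh v hv)
  | mul g h _ _ hg hh => exact fun v hv => (mul_assoc g h v).symm ▸ hg _ (hh v hv)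

section PolynomialStructure

variable [Invertible (2 : K)]

variable (K) in
/-- The central element `(ab + ba) / 2`; the group algebra is free of rank four over the
polynomial ring it generates. -/
noncomputable def tau : InfiniteDihedralAlgebra K := (⅟2 : K) • (a K * b K + b K * a K)

theorem tau_mem_center : tau K ∈ Subalgebra.center K (InfiniteDihedralAlgebra K) := by
  rw [Subalgebra.mem_center_iff]
  intro u
  have ha : Commute (tau K) (a K) := by
    refine Commute.smul_left ?_ _
    simp only [commute_iff_eq, add_mul, mul_add, mul_assoc, a_mul_a, ← mul_assoc (a K) (a K),
      one_mul, mul_one, add_comm]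
  have hb : Commute (tau K) (b K) := by
    refine Commute.smul_left ?_ _
    simp only [commute_iff_eq, add_mul, mul_add, mul_assoc, b_mul_b, ← mul_assoc (b K) (b K),
      one_mul, mul_one, add_comm]
  induction u using induction_left with
  | one => exact Commute.one_left _
  | add u v hu hv => exact Commute.add_left hu hv
  | smul k u hu => exact Commute.smul_left hu k
  | a_mul u hu => exact ha.symm.mul_left hu
  | b_mul u hu => exact hb.symm.mul_left hu

/-- The group algebra as an algebra over `K[X]`, with `X` acting as the central element `tau`. -/
noncomputable abbrev polynomialAlgebra : Algebra K[X] (InfiniteDihedralAlgebra K) :=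
  (aeval (tau K)).toRingHom.toAlgebra' fun p u => by
    have hcenter : aeval (tau K) p ∈ Subalgebra.center K _ :=
      Algebra.adjoin_le (Set.singleton_subset_iff.mpr tau_mem_center)
        (aeval_mem_adjoin_singleton K (tau K))
    exact (Subalgebra.mem_center_iff.mp hcenter u).symm

attribute [local instance] polynomialAlgebra

theorem polynomial_smul_def (p : K[X]) (u : InfiniteDihedralAlgebra K) :
    p • u = aeval (tau K) p * u := rfl

local instance : IsScalarTower K K[X] (InfiniteDihedralAlgebra K) :=
  .of_algebraMap_eq fun k => (aeval_C (tau K) k).symm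

theorem b_mul_a : b K * a K = (2 * X : K[X]) • 1 - a K * b K := by
  have h2 : (2 * X : K[X]) • (1 : InfiniteDihedralAlgebra K) = a K * b K + b K * a K := by
    rw [polynomial_smul_def, mul_one, map_mul, map_ofNat, aeval_X, tau, mul_smul_comm,
      two_mul, ← two_smul K (_ + _), invOf_smul_smul]
  rw [h2, add_sub_cancel_left]

theorem exists_eq_polynomial_smul (u : InfiniteDihedralAlgebra K) :
    ∃ p q r s : K[X], u = p • 1 + q • a K + r • b K + s • (a K * b K) := by
  induction u using induction_left with
  | one => exact ⟨1, 0, 0, 0, by module⟩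
  | add u v hu hv =>
    obtain ⟨p, q, r, s, rfl⟩ := hu
    obtain ⟨p', q', r', s', rfl⟩ := hv
    exact ⟨p + p', q + q', r + r', s + s', by module⟩
  | smul k u hu =>
    obtain ⟨p, q, r, s, rfl⟩ := hu
    exact ⟨k • p, k • q, k • r, k • s, by simp only [smul_add, smul_assoc]⟩
  | a_mul u hu =>
    obtain ⟨p, q, r, s, rfl⟩ := hu
    refine ⟨q, p, s, r, ?_⟩
    simp only [mul_add, mul_smul_comm, mul_one, ← mul_assoc, a_mul_a, one_mul]
    module
  | b_mul u hu =>
    obtain ⟨p, q, r, s, rfl⟩ := hu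
    refine ⟨r + 2 * X * q, -s, p + 2 * X * s, -q, ?_⟩
    have hbab : b K * (a K * b K) = (2 * X : K[X]) • b K - a K := by
      rw [← mul_assoc, b_mul_a, sub_mul, smul_mul_assoc, one_mul, mul_assoc, b_mul_b, mul_one]
    simp only [mul_add, mul_smul_comm, mul_one, b_mul_b, b_mul_a, hbab]
    module

/-- The faithful representation of the group algebra by `2 × 2` matrices over `K[X]` in which `a`
acts as a diagonal matrix and the central element `tau` as the scalar `X`. -/
noncomputable def representation :
    InfiniteDihedralAlgebra K →ₐ[K[X]] Matrix (Fin 2) (Fin 2) K[X] :=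
  let φ : InfiniteDihedralAlgebra K →ₐ[K] Matrix (Fin 2) (Fin 2) K[X] :=
    lift !![1, 0; 0, -1] !![X, -1; X ^ 2 - 1, -X]
      (by simp [Matrix.one_fin_two]) (by rw [Matrix.mul_fin_two, Matrix.one_fin_two]; ring_nf)
  { φ with
    commutes' p := by
      have hφ : φ.comp (aeval (tau K)) = IsScalarTower.toAlgHom K K[X] _ := by
        refine Polynomial.algHom_ext ?_
        rw [AlgHom.comp_apply, aeval_X, tau, map_smul, map_add, map_mul, map_mul, lift_a, lift_b]
        refine Matrix.ext fun i j => ?_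
        fin_cases i <;> fin_cases j <;> simp [Matrix.algebraMap_matrix_apply]
      exact DFunLike.congr_fun hφ p }

theorem representation_a : representation (a K) = !![1, 0; 0, -1] := lift_a ..

theorem representation_b : representation (b K) = !![X, -1; X ^ 2 - 1, -X] := lift_b ..

theorem representation_polynomial_smul (p q r s : K[X]) :
    representation (p • 1 + q • a K + r • b K + s • (a K * b K)) =
      !![p + q + (r + s) * X, -(r + s); (X ^ 2 - 1) * (r - s), p - q - (r - s) * X] := by
  simp only [map_add, map_smul, map_mul, map_one, representation_a, representation_b]
  simp only [Matrix.one_fin_two, Matrix.mul_fin_two, Matrix.smul_of, Matrix.of_add_of]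
  refine Matrix.ext fun i j => ?_
  fin_cases i <;> fin_cases j <;> simp <;> ring

theorem representation_injective : Function.Injective (representation (K := K)) := by
  rw [injective_iff_map_eq_zero]
  intro u hu
  obtain ⟨p, q, r, s, rfl⟩ := exists_eq_polynomial_smul u
  rw [representation_polynomial_smul] at hu
  have h₀₁ : r + s = 0 := neg_eq_zero.mp (congrFun₂ hu 0 1)
  have h₁₀ : r - s = 0 := X_sq_sub_one_monic.mul_right_eq_zero_iff.mp (congrFun₂ hu 1 0)
  have h₀₀ : p + q + (r + s) * X = 0 := congrFun₂ hu 0 0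
  have h₁₁ : p - q - (r - s) * X = 0 := congrFun₂ hu 1 1
  rw [h₀₁, zero_mul, add_zero] at h₀₀
  rw [h₁₀, zero_mul, sub_zero] at h₁₁
  obtain ⟨rfl, rfl⟩ := eq_zero_of_add_eq_zero_of_sub_eq_zero K h₀₁ h₁₀
  obtain ⟨rfl, rfl⟩ := eq_zero_of_add_eq_zero_of_sub_eq_zero K h₀₀ h₁₁
  simp only [zero_smul, add_zero]

theorem mem_range_representation_iff {M : Matrix (Fin 2) (Fin 2) K[X]} :
    M ∈ Set.range (representation (K := K)) ↔ X ^ 2 - 1 ∣ M 1 0 := by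
  constructor
  · rintro ⟨u, rfl⟩
    obtain ⟨p, q, r, s, rfl⟩ := exists_eq_polynomial_smul u
    rw [representation_polynomial_smul]
    exact Dvd.intro _ rfl
  · rintro ⟨m, hm⟩
    obtain ⟨r, s, hadd, hsub⟩ := exists_add_eq_and_sub_eq K (-M 0 1) m
    obtain ⟨p, q, hadd', hsub'⟩ :=
      exists_add_eq_and_sub_eq K (M 0 0 - (r + s) * X) (M 1 1 + (r - s) * X)
    refine ⟨p • 1 + q • a K + r • b K + s • (a K * b K), ?_⟩
    rw [representation_polynomial_smul, hadd', hsub', hadd, hsub, ← hm, sub_add_cancel,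
      add_sub_cancel_right, neg_neg, ← Matrix.eta_fin_two]

theorem isConj_of_representation_mul_eq_mul {u v : InfiniteDihedralAlgebra K}
    {G : Matrix (Fin 2) (Fin 2) K[X]} (hdet : G.det = 1) (hdvd : X ^ 2 - 1 ∣ G 1 0)
    (hG : representation u * G = G * representation v) : IsConj u v := by
  obtain ⟨g, hg⟩ := mem_range_representation_iff.mpr hdvd
  obtain ⟨g', hg'⟩ : G.adjugate ∈ Set.range (representation (K := K)) := by
    rw [mem_range_representation_iff, Matrix.adjugate_fin_two]
    exact (dvd_neg (α := K[X])).mpr hdvd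
  have hgg' : g * g' = 1 := representation_injective <| by
    rw [map_mul, hg, hg', Matrix.mul_adjugate, hdet, one_smul, map_one]
  have hg'g : g' * g = 1 := representation_injective <| by
    rw [map_mul, hg, hg', Matrix.adjugate_mul, hdet, one_smul, map_one]
  refine IsConj.symm ⟨⟨g, g', hgg', hg'g⟩, representation_injective ?_⟩
  rw [map_mul, map_mul, hg, hG]

theorem isConj_of_eval_representation_eq [IsDomain K] [DecompositionMonoid K[X]]
    {u v : InfiniteDihedralAlgebra K} (hu : IsRankOneIdempotent (representation u))
    (hv : IsRankOneIdempotent (representation v))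
    (h₁ : (representation u 0 0).eval 1 = (representation v 0 0).eval 1)
    (h₂ : (representation u 0 0).eval (-1) = (representation v 0 0).eval (-1)) : IsConj u v := by
  obtain ⟨G, hdet, hdvd, hG⟩ := hu.exists_det_eq_one_mul_eq_mul hv
    (mem_range_representation_iff.mp ⟨u, rfl⟩) (mem_range_representation_iff.mp ⟨v, rfl⟩)
    (X_sq_sub_one_dvd_of_eval_eq_zero (by rw [eval_sub, h₁, sub_self])
      (by rw [eval_sub, h₂, sub_self]))
  exact isConj_of_representation_mul_eq_mul hdet hdvd hG

theorem eval_representation_eq_zero_or_one [IsDomain K] {u : InfiniteDihedralAlgebra K}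
    (hu : IsRankOneIdempotent (representation u)) {x : K} (hx : x ^ 2 = 1) :
    (representation u 0 0).eval x = 0 ∨ (representation u 0 0).eval x = 1 := by
  obtain ⟨m, hm⟩ := mem_range_representation_iff.mp ⟨u, rfl⟩
  have htr := congrArg (eval x) hu.trace_eq_one
  have hdet := congrArg (eval x) hu.det_eq_zero
  simp only [Matrix.trace_fin_two, eval_add, eval_one] at htr
  simp only [Matrix.det_fin_two, hm, eval_sub, eval_mul, eval_pow, eval_X, eval_one, eval_zero, hx,
    sub_self, zero_mul, mul_zero, sub_zero] at hdet
  rcases mul_eq_zero.mp hdet with h | h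
  · exact .inl h
  · exact .inr (by rwa [h, add_zero] at htr)

theorem isConj_invOf_two_smul_one_add [IsDomain K] [DecompositionMonoid K[X]]
    {u g : InfiniteDihedralAlgebra K} (hu : IsRankOneIdempotent (representation u))
    (htr : (representation g).trace = 0) (hdet : (representation g).det = -1)
    (h₁ : (representation u 0 0).eval 1 = ⅟2 * (1 + (representation g 0 0).eval 1))
    (h₂ : (representation u 0 0).eval (-1) = ⅟2 * (1 + (representation g 0 0).eval (-1))) :
    IsConj u ((⅟2 : K) • (1 + g)) := by
  have hrep : representation ((⅟2 : K) • (1 + g)) = (⅟2 : K) • (1 + representation g) := by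
    rw [← algebraMap_smul K[X], map_smul, map_add, map_one, algebraMap_smul]
  refine isConj_of_eval_representation_eq hu
    (hrep ▸ isRankOneIdempotent_invOf_two_smul_one_add htr hdet) ?_ ?_ <;>
      rw [hrep] <;> simp [mul_add, h₁, h₂]

theorem isConj_invOf_two_smul_of_isRankOneIdempotent [IsDomain K] [DecompositionMonoid K[X]]
    {u : InfiniteDihedralAlgebra K} (hu : IsRankOneIdempotent (representation u)) :
    IsConj u ((⅟2 : K) • (1 - a K)) ∨ IsConj u ((⅟2 : K) • (1 + a K)) ∨
      IsConj u ((⅟2 : K) • (1 - b K)) ∨ IsConj u ((⅟2 : K) • (1 + b K)) := by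
  have htr_a : (representation (a K)).trace = 0 := by simp [representation_a]
  have hdet_a : (representation (a K)).det = -1 := by simp [representation_a]
  have htr_b : (representation (b K)).trace = 0 := by simp [representation_b]
  have hdet_b : (representation (b K)).det = -1 := by
    rw [representation_b, Matrix.det_fin_two_of]
    ring
  simp only [sub_eq_add_neg (1 : InfiniteDihedralAlgebra K)]
  rcases eval_representation_eq_zero_or_one hu (one_pow 2) with h₁ | h₁ <;>
    rcases eval_representation_eq_zero_or_one hu (neg_one_sq (R := K)) with h₂ | h₂
  · exact .inl <| isConj_invOf_two_smul_one_add hu (by simp [htr_a])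
      (by simp [Matrix.det_neg, hdet_a]) (by simp [representation_a, h₁])
      (by simp [representation_a, h₂])
  · exact .inr <| .inr <| .inl <| isConj_invOf_two_smul_one_add hu (by simp [htr_b])
      (by simp [Matrix.det_neg, hdet_b]) (by simp [representation_b, h₁])
      (by simp [representation_b, h₂, one_add_one_eq_two])
  · exact .inr <| .inr <| .inr <| isConj_invOf_two_smul_one_add hu htr_b hdet_b
      (by simp [representation_b, h₁, one_add_one_eq_two]) (by simp [representation_b, h₂])
  · exact .inr <| .inl <| isConj_invOf_two_smul_one_add hu htr_a hdet_a
      (by simp [representation_a, h₁, one_add_one_eq_two])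
      (by simp [representation_a, h₂, one_add_one_eq_two])

variable (K) in
/-- Representatives of the conjugacy classes of idempotents. -/
def standardIdempotents : Set (InfiniteDihedralAlgebra K) :=
  {0, 1, (⅟2 : K) • (1 - a K), (⅟2 : K) • (1 + a K), (⅟2 : K) • (1 - b K), (⅟2 : K) • (1 + b K)}

theorem exists_isConj_standardIdempotents [IsDomain K] [DecompositionMonoid K[X]]
    {u : InfiniteDihedralAlgebra K} (hu : IsIdempotentElem u) :
    ∃ v ∈ standardIdempotents K, IsConj u v := by
  simp only [standardIdempotents, Set.mem_insert_iff, Set.mem_singleton_iff, exists_eq_or_imp,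
    exists_eq_left]
  rcases eq_zero_or_eq_one_or_isRankOneIdempotent (hu.map representation) with h | h | h
  · rw [map_eq_zero_iff _ representation_injective] at h
    exact .inl (h ▸ .refl _)
  · rw [map_eq_one_iff _ representation_injective] at h
    exact .inr (.inl (h ▸ .refl _))
  · exact .inr (.inr (isConj_invOf_two_smul_of_isRankOneIdempotent h))

theorem eq_of_forall_algHom_eq [Nontrivial K] {u v : InfiniteDihedralAlgebra K}
    (hu : u ∈ standardIdempotents K) (hv : v ∈ standardIdempotents K)
    (h : ∀ χ : InfiniteDihedralAlgebra K →ₐ[K] K, χ u = χ v) : u = v := by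
  have hsign : (-1 : K) * -1 = 1 := by rw [neg_mul_neg, one_mul]
  have h₁ := h (lift 1 1 (one_mul 1) (one_mul 1))
  have h₂ := h (lift 1 (-1) (one_mul 1) hsign)
  have h₃ := h (lift (-1) 1 hsign (one_mul 1))
  have h₄ := h (lift (-1) (-1) hsign hsign)
  rcases hu with rfl | rfl | rfl | rfl | rfl | rfl <;>
    rcases hv with rfl | rfl | rfl | rfl | rfl | rfl <;>
    first | rfl | (simp [lift_a, lift_b, one_add_one_eq_two] at h₁ h₂ h₃ h₄)

theorem eq_of_isConj [Nontrivial K] {u v : InfiniteDihedralAlgebra K}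
    (hu : u ∈ standardIdempotents K) (hv : v ∈ standardIdempotents K) (h : IsConj u v) : u = v :=
  eq_of_forall_algHom_eq hu hv fun χ => isConj_iff_eq.mp ((χ : _ →* K).map_isConj h)

end PolynomialStructure

end InfiniteDihedralAlgebra

end GroupAlgebra

theorem isConj_iff_exists_inv_mul_mul {M : Type*} [Monoid M] {u v : M} :
    IsConj u v ↔ ∃ ν : Mˣ, ↑ν⁻¹ * u * ν = v := by
  constructor
  · rintro ⟨c, hc⟩
    exact ⟨c⁻¹, by rw [inv_inv, hc.eq, Units.mul_inv_cancel_right]⟩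
  · rintro ⟨ν, rfl⟩
    exact ⟨ν⁻¹, by rw [SemiconjBy, Units.mul_inv_cancel_right]⟩

open InfiniteDihedralAlgebra in
theorem stmt_8_general (K : Type*) [CommRing K] [IsDomain K] [DecompositionMonoid K[X]]
    [Invertible (2 : K)] (u : InfiniteDihedralAlgebra K) (hu : IsIdempotentElem u) :
    ∃! v, v ∈ standardIdempotents K ∧
      ∃ ν : (InfiniteDihedralAlgebra K)ˣ, (↑ν⁻¹ : InfiniteDihedralAlgebra K) * u * ν = v := by
  simp only [← isConj_iff_exists_inv_mul_mul]
  obtain ⟨v, hv, huv⟩ := exists_isConj_standardIdempotents hu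
  exact ⟨v, ⟨hv, huv⟩, fun w ⟨hw, huw⟩ => eq_of_isConj hw hv (huw.symm.trans huv)⟩

theorem stmt_8 (K : Type*) [Field K] [IsAlgClosed K] (hK : ringChar K ≠ 2)
    (u : MonoidAlgebra K (DihedralGroup 0)) (hu : IsIdempotentElem u) :
    let R := MonoidAlgebra K (DihedralGroup 0)
    let a : R := MonoidAlgebra.of K (DihedralGroup 0) (DihedralGroup.sr 0)
    let b : R := MonoidAlgebra.of K (DihedralGroup 0) (DihedralGroup.sr 1)
    ∃! v, v ∈ ({0, 1, (2 : K)⁻¹ • (1 - a), (2 : K)⁻¹ • (1 + a),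
        (2 : K)⁻¹ • (1 - b), (2 : K)⁻¹ • (1 + b)} : Set R) ∧
      ∃ ν : Rˣ, (↑ν⁻¹ : R) * u * ν = v := by
  let := invertibleOfNonzero (Ring.two_ne_zero hK)
  exact stmt_8_general K u hu
end
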